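/- arXiv:2410.01549 — 3 statements merged into one kernel-verified Lean document; each statement's English description precedes it below -/
import Mathlib

section
/- For every even integer k ≥ 4, there exists a Gallai k-coloring of the complete graph on 14·5^((k−2)/2) vertices that contains no monochromatic copy of the fan F_3. Consequently, the Gallai–Ramsey number satisfies GR_k(F_3) ≥ 14·5^((k−2)/2) + 1. -/
open SimpleGraph

/-- A monochromatic copy of `H` in the graph `G` edge-colored by `c`:
an injective map sending edges of `H` to edges of `G`, all image edges of one color. -/
def IsMonoCopy {α V : Type*} {k : ℕ} (G : SimpleGraph V) (c : V → V → Fin k)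
    (H : SimpleGraph α) : Prop :=
  ∃ (f : α → V) (i : Fin k), Function.Injective f ∧
    ∀ a b, H.Adj a b → G.Adj (f a) (f b) ∧ c (f a) (f b) = i

/-- The edge coloring `c` of `G` has no rainbow triangle. -/
def NoRainbowTriangle {V : Type*} {k : ℕ} (G : SimpleGraph V) (c : V → V → Fin k) : Prop :=
  ¬ ∃ x y z : V, G.Adj x y ∧ G.Adj y z ∧ G.Adj x z ∧
    c x y ≠ c y z ∧ c y z ≠ c x z ∧ c x y ≠ c x z

/-- The Gallai–Ramsey number `GR_k(H)`: the least `N` such that every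
rainbow-triangle-free `k`-edge-coloring of the complete graph on `N` vertices
contains a monochromatic copy of `H`. -/
noncomputable def GallaiRamsey (k : ℕ) {α : Type*} (H : SimpleGraph α) : ℕ :=
  sInf {N | ∀ c : Fin N → Fin N → Fin k, (∀ x y, c x y = c y x) →
    NoRainbowTriangle (⊤ : SimpleGraph (Fin N)) c →
    IsMonoCopy (⊤ : SimpleGraph (Fin N)) c H}

/-- The diagonal two-color Ramsey number `R(H, H)`. -/
noncomputable def Ramsey2 {α : Type*} (H : SimpleGraph α) : ℕ :=
  sInf {N | ∀ c : Fin N → Fin N → Fin 2, (∀ x y, c x y = c y x) →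
    IsMonoCopy (⊤ : SimpleGraph (Fin N)) c H}

/-- The fan `F_3 = K_1 + 3K_2`: vertex `0` is the center, joined to all other
vertices, together with the three disjoint edges `12`, `34`, `56`. -/
def fanF3 : SimpleGraph (Fin 7) :=
  SimpleGraph.fromRel (fun a b => a = 0 ∨ (a.val % 2 = 1 ∧ b.val = a.val + 1))

/-- The kipas `K̂_m = K_1 + P_m`: vertex `0` is the center, joined to all other
vertices, and `1, 2, …, m` form a path. -/
def kipasG (m : ℕ) : SimpleGraph (Fin (m + 1)) :=
  SimpleGraph.fromRel (fun a b => a = 0 ∨ (1 ≤ a.val ∧ b.val = a.val + 1))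

/-- The wheel `W_m = K_1 + C_m`: vertex `0` is the center, joined to all other
vertices, and `1, 2, …, m` form a cycle. -/
def wheelG (m : ℕ) : SimpleGraph (Fin (m + 1)) :=
  SimpleGraph.fromRel (fun a b =>
    a = 0 ∨ (1 ≤ a.val ∧ b.val = a.val + 1) ∨ (a.val = m ∧ b.val = 1))

/-- The star `K_{1,n}`: vertex `0` is the center, joined to all other vertices. -/
def starG (n : ℕ) : SimpleGraph (Fin (n + 1)) :=
  SimpleGraph.fromRel (fun a _ => a = 0)

/-- `K⁺_{1,n}`, the star `K_{1,n}` with one edge subdivided: vertex `0` is joined to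
`1, …, n`, and the extra vertex `n+1` is joined to `n`. -/
def starPlusG (n : ℕ) : SimpleGraph (Fin (n + 2)) :=
  SimpleGraph.fromRel (fun a b => (a = 0 ∧ b.val ≤ n) ∨ (a.val = n ∧ b.val = n + 1))

/-- The complete graph on `Fin N` with the single edge `{0, 1}` deleted. -/
def compMinusEdge (N : ℕ) : SimpleGraph (Fin N) where
  Adj x y := x ≠ y ∧ ¬(x.val = 0 ∧ y.val = 1) ∧ ¬(x.val = 1 ∧ y.val = 0)
  symm := by
    constructor
    intro x y h
    exact ⟨h.1.symm, fun hc => h.2.2 ⟨hc.2, hc.1⟩, fun hc => h.2.1 ⟨hc.2, hc.1⟩⟩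
  loopless := by constructor; intro x h; exact h.1 rfl

/-- The complete graph on `Fin M` together with one extra vertex (`none`)
joined exactly to the vertices of `A`. -/
def addVertex (M : ℕ) (A : Set (Fin M)) : SimpleGraph (Option (Fin M)) where
  Adj x y := (∃ a b : Fin M, x = some a ∧ y = some b ∧ a ≠ b) ∨
    (∃ a ∈ A, (x = some a ∧ y = none) ∨ (x = none ∧ y = some a))
  symm := by
    constructor
    rintro x y (⟨a, b, hx, hy, hab⟩ | ⟨a, ha, (⟨hx, hy⟩ | ⟨hx, hy⟩)⟩)
    · exact Or.inl ⟨b, a, hy, hx, hab.symm⟩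
    · exact Or.inr ⟨a, ha, Or.inr ⟨hy, hx⟩⟩
    · exact Or.inr ⟨a, ha, Or.inl ⟨hy, hx⟩⟩
  loopless := by
    constructor
    rintro x (⟨a, b, hx, hy, hab⟩ | ⟨a, ha, (⟨hx, hy⟩ | ⟨hx, hy⟩)⟩) <;> simp_all

/-- The star-critical Gallai–Ramsey number `GR*_k(H)`: the least `s` such that
every rainbow-triangle-free `k`-edge-coloring of the complete graph on
`GR_k(H) - 1` vertices plus one extra vertex joined to exactly `s` of them
contains a monochromatic copy of `H`. -/
noncomputable def GRstar (k : ℕ) {α : Type*} (H : SimpleGraph α) : ℕ :=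
  sInf {s | ∀ A : Finset (Fin (GallaiRamsey k H - 1)), A.card = s →
    ∀ c : Option (Fin (GallaiRamsey k H - 1)) → Option (Fin (GallaiRamsey k H - 1)) → Fin k,
      (∀ x y, c x y = c y x) →
      NoRainbowTriangle (addVertex (GallaiRamsey k H - 1) (↑A)) c →
      IsMonoCopy (addVertex (GallaiRamsey k H - 1) (↑A)) c H}

/-- `H` is Gallai-Ramsey-full for `k` colors: the complete graph on `GR_k(H)`
vertices minus one edge admits a rainbow-triangle-free `k`-edge-coloring with
no monochromatic copy of `H`. -/
def GallaiRamseyFull (k : ℕ) {α : Type*} (H : SimpleGraph α) : Prop :=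
  ∃ c : Fin (GallaiRamsey k H) → Fin (GallaiRamsey k H) → Fin k,
    (∀ x y, c x y = c y x) ∧
    NoRainbowTriangle (compMinusEdge (GallaiRamsey k H)) c ∧
    ¬ IsMonoCopy (compMinusEdge (GallaiRamsey k H)) c H

/-- Reachability inside the vertex set `s`: there is a walk all of whose
vertices lie in `s`. -/
def ReachableWithin {V : Type*} (R : SimpleGraph V) (s : Set V) (u v : V) : Prop :=
  ∃ w : R.Walk u v, ∀ x ∈ w.support, x ∈ s


/-! Both color classes of the two-colored pentagon are triangle-free, and substituting colorings for
its vertices keeps rainbow triangles away. If a color class arises by substituting graphs `G p` for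
the vertices of a triangle-free graph `D`, then every blade of a fan centered in part `p` either
contains a neighbor of the center in `G p`, or lies inside a single part adjacent to `p`. When any
two edges of each `G q` meet, disjoint blades use distinct such neighbors and parts, so the degrees
in `G p` and the number of nonempty parts adjacent to `p` bound the size of the fan.

With this bound, an edge and four triangles, all monochromatic, fit into a pentagon: 14 vertices,
where only the edge has a color outside the pentagon. Five copies fit into a pentagon of two further
colors which also color the five edges, giving 70 vertices in 4 colors. From then on, each pentagon
of two new colors multiplies the number of vertices by 5.

Ramsey's theorem enters because a lower bound on the infimum `GallaiRamsey` needs the set to be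
nonempty: the infimum of the empty set of natural numbers is `0`.
-/

section Fans

variable {V W : Type*} {G : SimpleGraph V} {n : ℕ}

/-- `G` contains no fan `K_1 + nK_2`: any `n` edges inside the neighborhood of a vertex (the blades
of the would-be fan) fail to be pairwise disjoint. -/
def FanFree (n : ℕ) (G : SimpleGraph V) : Prop :=
  ∀ (v : V) (e : Fin n → Sym2 V), (∀ t, e t ∈ G.edgeSet ∧ ∀ x ∈ e t, G.Adj v x) →
    ∃ s t, s ≠ t ∧ ∃ x ∈ e s, x ∈ e t

/-- Any two edges of `G` share a vertex, so that `G` is a star or a triangle, up to isolated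
vertices. -/
def EdgesMeet (G : SimpleGraph V) : Prop :=
  ∀ e ∈ G.edgeSet, ∀ f ∈ G.edgeSet, ∃ x ∈ e, x ∈ f

theorem FanFree.of_isContained {G' : SimpleGraph W} (h : FanFree n G') (hG : G ⊑ G') :
    FanFree n G := by
  obtain ⟨f⟩ := hG
  intro v e he
  obtain ⟨s, t, hst, x, hs, ht⟩ := h (f v) (fun t => (e t).map f) fun t => by
    refine ⟨f.toHom.map_mem_edgeSet (he t).1, fun x hx => ?_⟩
    obtain ⟨y, hy, rfl⟩ := Sym2.mem_map.1 hx
    exact f.toHom.map_adj ((he t).2 y hy)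
  obtain ⟨y, hy, rfl⟩ := Sym2.mem_map.1 hs
  obtain ⟨z, hz, hzy⟩ := Sym2.mem_map.1 ht
  exact ⟨s, t, hst, y, hy, f.injective hzy ▸ hz⟩

theorem not_fanFree_fanF3 : ¬ FanFree 3 fanF3 := by
  have blades : ∀ t : Fin 3, ![s(1, 2), s(3, 4), s(5, 6)] t ∈ fanF3.edgeSet ∧
      ∀ x ∈ ![s(1, 2), s(3, 4), s(5, 6)] t, fanF3.Adj 0 x := by
    unfold fanF3
    decide
  have disjoint : ¬ ∃ s t : Fin 3, s ≠ t ∧ ∃ x : Fin 7,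
      x ∈ ![s(1, 2), s(3, 4), s(5, 6)] s ∧ x ∈ ![s(1, 2), s(3, 4), s(5, 6)] t := by
    decide
  exact fun h => disjoint (h 0 _ blades)

theorem edgesMeet_of_encard_support_le_three (h : G.support.encard ≤ 3) : EdgesMeet G := by
  intro e he f hf
  induction e with | _ a b
  induction f with | _ c d
  by_contra! hdisj
  have hcard : ({a, b} ∪ {c, d} : Set V).encard = 4 := by
    rw [Set.encard_union_eq, Set.encard_pair (G.ne_of_adj he), Set.encard_pair (G.ne_of_adj hf)]
    · norm_num
    · simpa [Set.disjoint_left] using hdisj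
  have hsub : ({a, b} ∪ {c, d} : Set V) ⊆ G.support := by
    rintro x ((rfl | rfl) | (rfl | rfl))
    exacts [⟨_, he⟩, ⟨_, G.adj_symm he⟩, ⟨_, hf⟩, ⟨_, G.adj_symm hf⟩]
  have := (Set.encard_le_encard hsub).trans h
  rw [hcard] at this
  exact absurd this (by decide)

theorem encard_neighborSet_le_of_encard_support_le {d : ℕ} (h : G.support.encard ≤ d + 1) (x : V) :
    (G.neighborSet x).encard ≤ d := by
  obtain hx | ⟨y, hy⟩ := (G.neighborSet x).eq_empty_or_nonempty
  · simp [hx]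
  have hsub : insert x (G.neighborSet x) ⊆ G.support :=
    Set.insert_subset ⟨y, hy⟩ (G.neighborSet_subset_support x)
  have := (Set.encard_le_encard hsub).trans h
  rw [Set.encard_insert_of_notMem (G.notMem_neighborSet_self)] at this
  exact (ENat.add_le_add_iff_right ENat.one_ne_top).1 this

end Fans

section LexSum

variable {P : Type*} {V : P → Type*} {D : SimpleGraph P} {G : ∀ p, SimpleGraph (V p)} {n : ℕ}

/-- The lexicographic sum (generalized composition) of the graphs `G p` over `D`: each vertex `p`
of `D` is replaced by a copy of `G p`, and distinct parts are completely joined along `D`. -/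
def lexSum (D : SimpleGraph P) (G : ∀ p, SimpleGraph (V p)) : SimpleGraph (Σ p, V p) where
  Adj := Sigma.Lex D.Adj fun p => (G p).Adj
  symm :=
    have := D.symm
    have := fun p => (G p).symm
    inferInstance
  loopless :=
    have := D.loopless
    have := fun p => (G p).loopless
    inferInstance

theorem fanFree_lexSum_bot (hG : ∀ p, FanFree n (G p)) : FanFree n (lexSum ⊥ G) := by
  rintro ⟨p, x⟩ e he
  have hpart : ∀ t, ∃ f ∈ (G p).edgeSet, (∀ y ∈ f, (G p).Adj x y) ∧ e t = f.map (Sigma.mk p) := by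
    intro t
    obtain ⟨hedge, hhub⟩ := he t
    generalize e t = f at hedge hhub
    induction f with | _ a b
    obtain ⟨_, _, ⟨⟩⟩ | ⟨_, y, hy⟩ := hhub a (Sym2.mem_mk_left a b)
    obtain ⟨_, _, ⟨⟩⟩ | ⟨_, z, hz⟩ := hhub b (Sym2.mem_mk_right _ b)
    obtain ⟨_, _, ⟨⟩⟩ | ⟨_, _, hyz⟩ := hedge
    exact ⟨s(y, z), hyz, by simp [hy, hz], rfl⟩
  choose f hf hhub hmap using hpart
  obtain ⟨s, t, hst, y, hs, ht⟩ := hG p x f fun t => ⟨hf t, hhub t⟩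
  refine ⟨s, t, hst, ⟨p, y⟩, ?_, ?_⟩
  · exact hmap s ▸ Sym2.mem_map.2 ⟨y, hs, rfl⟩
  · exact hmap t ▸ Sym2.mem_map.2 ⟨y, ht, rfl⟩

theorem support_lexSum_bot {p : P} (hG : ∀ q ≠ p, G q = ⊥) :
    (lexSum ⊥ G).support = Sigma.mk p '' (G p).support := by
  ext ⟨q, x⟩
  constructor
  · rintro ⟨_, ⟨_, _, ⟨⟩⟩ | ⟨_, y, hxy⟩⟩
    obtain rfl | hqp := eq_or_ne q p
    · exact ⟨x, ⟨y, hxy⟩, rfl⟩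
    · rw [hG q hqp] at hxy
      exact hxy.elim
  · rintro ⟨_, ⟨y, hxy⟩, ⟨⟩⟩
    exact ⟨⟨p, y⟩, .right _ _ hxy⟩

theorem blade_lexSum_cases (hD : D.CliqueFree 3) {p : P} {x : V p} {e : Sym2 (Σ p, V p)}
    (he : e ∈ (lexSum D G).edgeSet) (hhub : ∀ a ∈ e, (lexSum D G).Adj ⟨p, x⟩ a) :
    (∃ y, (G p).Adj x y ∧ ⟨p, y⟩ ∈ e) ∨
      ∃ q, D.Adj p q ∧ ∃ f ∈ (G q).edgeSet, e = f.map (Sigma.mk q) := by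
  classical
  induction e with | _ a b
  obtain ⟨_, y, hpq⟩ | ⟨_, y, hy⟩ := hhub a (Sym2.mem_mk_left a b)
  · obtain ⟨_, _, hpr⟩ | ⟨_, z, hz⟩ := hhub b (Sym2.mem_mk_right _ b)
    · obtain ⟨_, _, hqr⟩ | ⟨_, z, hyz⟩ := he
      · exact absurd (is3Clique_triple_iff.2 ⟨hpq, hpr, hqr⟩) (hD _)
      · exact .inr ⟨_, hpq, s(y, z), hyz, rfl⟩
    · exact .inl ⟨z, hz, Sym2.mem_mk_right _ _⟩
  · exact .inl ⟨y, hy, Sym2.mem_mk_left _ _⟩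

variable [Fintype P] [DecidableRel D.Adj]

theorem fanFree_lexSum (hD : D.CliqueFree 3) (hG : ∀ p, EdgesMeet (G p)) (w : P → ℕ)
    (hdeg : ∀ p x, ((G p).neighborSet x).encard ≤ w p)
    (hw : ∀ p, w p + Finset.card {q | D.Adj p q ∧ w q ≠ 0} < n) : FanFree n (lexSum D G) := by
  rintro ⟨p, x⟩ e he
  let labels : Set (V p ⊕ P) :=
    Sum.inl '' (G p).neighborSet x ∪ Sum.inr '' {q | D.Adj p q ∧ w q ≠ 0}
  have hlabel : ∀ t, ∃ l ∈ labels, l.elim (fun y => ⟨p, y⟩ ∈ e t)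
      fun q => ∃ f ∈ (G q).edgeSet, e t = f.map (Sigma.mk q) := by
    intro t
    obtain ⟨y, hxy, hy⟩ | ⟨q, hpq, f, hf, hft⟩ := blade_lexSum_cases hD (he t).1 (he t).2
    · exact ⟨.inl y, .inl ⟨y, hxy, rfl⟩, hy⟩
    · refine ⟨.inr q, .inr ⟨q, ⟨hpq, fun hq => ?_⟩, rfl⟩, f, hf, hft⟩
      induction f with | _ y z
      have hempty : (G q).neighborSet y = ∅ := by simpa [hq] using hdeg q y
      exact Set.eq_empty_iff_forall_notMem.1 hempty z hf
  choose l hl hlt using hlabel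
  have hcard : labels.encard < (Set.univ : Set (Fin n)).encard := by
    calc labels.encard
        ≤ ((G p).neighborSet x).encard + {q | D.Adj p q ∧ w q ≠ 0}.encard := by
          grw [Set.encard_union_le, Sum.inl_injective.encard_image, Sum.inr_injective.encard_image]
      _ ≤ w p + Finset.card {q | D.Adj p q ∧ w q ≠ 0} := by
          rw [← Set.encard_coe_eq_coe_finsetCard, Finset.coe_filter_univ]
          grw [hdeg p x]
      _ < n := mod_cast hw p
      _ = _ := by simp
  obtain ⟨s, -, t, -, hst, hlst⟩ :=
    Set.exists_ne_map_eq_of_encard_lt_of_maps_to hcard fun t _ => hl t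
  refine ⟨s, t, hst, ?_⟩
  have hs := hlt s
  have ht := hlt t
  rw [← hlst] at ht
  generalize l s = label at hs ht
  obtain y | q := label
  · exact ⟨_, hs, ht⟩
  · obtain ⟨f, hf, hfs⟩ := hs
    obtain ⟨g, hg, hgt⟩ := ht
    obtain ⟨y, hyf, hyg⟩ := hG q f hf g hg
    exact ⟨⟨q, y⟩, hfs ▸ Sym2.mem_map.2 ⟨y, hyf, rfl⟩, hgt ▸ Sym2.mem_map.2 ⟨y, hyg, rfl⟩⟩

theorem fanFree_three_lexSum (hD : D.CliqueFree 3) (w : P → ℕ)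
    (hG : ∀ p, (G p).support.encard ≤ w p + 1)
    (hw : ∀ p, w p + Finset.card {q | D.Adj p q ∧ w q ≠ 0} < 3) : FanFree 3 (lexSum D G) := by
  refine fanFree_lexSum hD (fun p => edgesMeet_of_encard_support_le_three ((hG p).trans ?_)) w
    (fun p => encard_neighborSet_le_of_encard_support_le (hG p)) hw
  have := hw p
  exact mod_cast (by omega : w p + 1 ≤ 3)

end LexSum

section Ramsey

universe u

variable {K : Type*} [Finite K]

theorem exists_isNClique_of_iSup_eq_top (r : K → ℕ) :
    ∃ N : ℕ, ∀ {V : Type u} (G : K → SimpleGraph V), ⨆ i, G i = ⊤ →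
      ∀ S : Finset V, N ≤ S.card → ∃ i, ∃ T ⊆ S, (G i).IsNClique (r i) T := by
  classical
  have := Fintype.ofFinite K
  induction r using WellFoundedLT.induction with | _ r ih
  by_cases hr : ∃ i, r i = 0
  · obtain ⟨i, hi⟩ := hr
    exact ⟨0, fun G _ S _ => ⟨i, ∅, Finset.empty_subset S, hi ▸ isNClique_empty.2 rfl⟩⟩
  have hlt : ∀ i, Function.update r i (r i - 1) < r := fun i =>
    update_lt_self_iff.2 (Nat.sub_one_lt fun hi => hr ⟨i, hi⟩)
  choose N hN using fun i => ih _ (hlt i)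
  refine ⟨∑ i, N i + 2, fun {V} G hG S hS => ?_⟩
  obtain ⟨v, hv⟩ : S.Nonempty := Finset.card_pos.1 (by omega)
  let nbr (i : K) : Finset V := {x ∈ S | (G i).Adj v x}
  obtain ⟨i, hi⟩ : ∃ i, N i < (nbr i).card := by
    by_contra! hle
    have hcover : S.erase v ⊆ Finset.univ.biUnion nbr := by
      intro x hx
      obtain ⟨hxv, hxS⟩ := Finset.mem_erase.1 hx
      have hadj : (⨆ i, G i).Adj v x := hG ▸ hxv.symm
      obtain ⟨i, hi⟩ := iSup_adj.1 hadj
      exact Finset.mem_biUnion.2 ⟨i, Finset.mem_univ i, Finset.mem_filter.2 ⟨hxS, hi⟩⟩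
    have hcard := (Finset.card_le_card hcover).trans <|
      Finset.card_biUnion_le.trans <| Finset.sum_le_sum fun i _ => hle i
    rw [Finset.card_erase_of_mem hv] at hcard
    omega
  obtain ⟨j, T, hTS, hT⟩ := hN i G hG (nbr i) hi.le
  have hTS' : T ⊆ S := hTS.trans (Finset.filter_subset _ S)
  obtain rfl | hji := eq_or_ne j i
  · refine ⟨j, insert v T, Finset.insert_subset hv hTS', ?_⟩
    rw [Function.update_self] at hT
    have := hT.insert fun b hb => (Finset.mem_filter.1 (hTS hb)).2
    rwa [Nat.sub_add_cancel (Nat.pos_of_ne_zero fun hj => hr ⟨j, hj⟩)] at this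
  · exact ⟨j, T, hTS', by rwa [Function.update_of_ne hji] at hT⟩

theorem exists_isContained_of_iSup_eq_top {α : Type*} [Finite α] (H : SimpleGraph α) :
    ∃ N : ℕ, ∀ G : K → SimpleGraph (Fin N), ⨆ i, G i = ⊤ → ∃ i, H ⊑ G i := by
  have := Fintype.ofFinite α
  obtain ⟨N, hN⟩ := exists_isNClique_of_iSup_eq_top fun _ : K => Fintype.card α
  refine ⟨N, fun G hG => ?_⟩
  obtain ⟨i, T, -, hT⟩ := hN G hG Finset.univ (by simp)
  refine ⟨i, (IsContained.of_le le_top).trans (?_ : ⊤ ⊑ G i)⟩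
  rw [← not_free, ← cliqueFree_iff_top_free]
  exact fun hfree => hfree T hT

end Ramsey

/-- An edge coloring without rainbow triangles of the complete graph on `V`. The colors on the
diagonal carry no information; `symm` makes the condition on triangles vacuous for triples with a
repeated vertex. -/
structure GallaiColoring (V K : Type*) where
  color : V → V → K
  symm : ∀ x y, color x y = color y x
  not_rainbow : ∀ x y z, color x y = color y z ∨ color y z = color x z ∨ color x y = color x z

namespace GallaiColoring

section Basic

variable {V W K L : Type*}

/-- The color class of `i`, as a graph. -/
def graph (c : GallaiColoring V K) (i : K) : SimpleGraph V where
  Adj x y := x ≠ y ∧ c.color x y = i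
  symm := ⟨fun x y h => ⟨h.1.symm, c.symm y x ▸ h.2⟩⟩
  loopless := ⟨fun _ h => h.1 rfl⟩

instance [DecidableEq V] [DecidableEq K] (c : GallaiColoring V K) (i : K) :
    DecidableRel (c.graph i).Adj :=
  fun x y => inferInstanceAs (Decidable (x ≠ y ∧ c.color x y = i))

theorem iSup_graph (c : GallaiColoring V K) : ⨆ i, c.graph i = ⊤ := by
  ext x y
  simp [graph]

theorem noRainbowTriangle {k : ℕ} (c : GallaiColoring V (Fin k)) :
    NoRainbowTriangle (⊤ : SimpleGraph V) c.color := by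
  rintro ⟨x, y, z, -, -, -, hxy, hyz, hxz⟩
  obtain h | h | h := c.not_rainbow x y z
  exacts [hxy h, hyz h, hxz h]

theorem isMonoCopy_iff {k : ℕ} (c : GallaiColoring V (Fin k)) {α : Type*} {H : SimpleGraph α} :
    IsMonoCopy (⊤ : SimpleGraph V) c.color H ↔ ∃ i, H ⊑ c.graph i :=
  ⟨fun ⟨f, i, hf, h⟩ => ⟨i, ⟨⟨⟨f, h _ _⟩, hf⟩⟩⟩,
    fun ⟨i, ⟨f⟩⟩ => ⟨f, i, f.injective, fun _ _ hab => f.toHom.map_adj hab⟩⟩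

theorem exists_color_eq {k : ℕ} (c : V → V → Fin k) (hsymm : ∀ x y, c x y = c y x)
    (hc : NoRainbowTriangle (⊤ : SimpleGraph V) c) :
    ∃ c' : GallaiColoring V (Fin k), c'.color = c := by
  refine ⟨⟨c, hsymm, fun x y z => ?_⟩, rfl⟩
  by_contra! h
  refine hc ⟨x, y, z, ?_, ?_, ?_, h.1, h.2.1, h.2.2⟩ <;> grind [top_adj]

/-- The pullback of a coloring along a map of vertices. -/
def comap (f : W → V) (c : GallaiColoring V K) : GallaiColoring W K where
  color x y := c.color (f x) (f y)
  symm _ _ := c.symm _ _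
  not_rainbow _ _ _ := c.not_rainbow _ _ _

theorem graph_comap_isContained (f : W ↪ V) (c : GallaiColoring V K) (i : K) :
    (c.comap f).graph i ⊑ c.graph i :=
  ⟨⟨⟨f, fun h => ⟨f.injective.ne h.1, h.2⟩⟩, f.injective⟩⟩

theorem lt_gallaiRamsey {N k : ℕ} {α : Type*} [Finite α] {H : SimpleGraph α}
    (c : GallaiColoring (Fin N) (Fin k)) (hc : ∀ i, H.Free (c.graph i)) :
    N < GallaiRamsey k H := by
  rw [← Nat.succ_le_iff, GallaiRamsey]
  refine le_csInf ?_ fun M hM => ?_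
  · obtain ⟨M, hM⟩ := exists_isContained_of_iSup_eq_top (K := Fin k) H
    refine ⟨M, fun c' hsymm hrainbow => ?_⟩
    obtain ⟨c', rfl⟩ := exists_color_eq c' hsymm hrainbow
    exact c'.isMonoCopy_iff.2 (hM c'.graph c'.iSup_graph)
  · by_contra! hMN
    let c' := c.comap (Fin.castLEEmb (Nat.le_of_lt_succ hMN))
    obtain ⟨i, hi⟩ := c'.isMonoCopy_iff.1 (hM c'.color c'.symm c'.noRainbowTriangle)
    exact hc i (hi.trans (c.graph_comap_isContained _ i))

/-- Renaming (and possibly merging) the colors of a coloring. -/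
def map (g : K → L) (c : GallaiColoring V K) : GallaiColoring V L where
  color x y := g (c.color x y)
  symm x y := congrArg g (c.symm x y)
  not_rainbow x y z := (c.not_rainbow x y z).imp (congrArg g) (.imp (congrArg g) (congrArg g))

theorem graph_map_apply {g : K → L} (hg : Function.Injective g) (c : GallaiColoring V K) (i : K) :
    (c.map g).graph (g i) = c.graph i := by
  ext x y
  simp [graph, map, hg.eq_iff]

theorem graph_map_of_notMem_range {g : K → L} {i : L} (hi : i ∉ Set.range g)
    (c : GallaiColoring V K) : (c.map g).graph i = ⊥ := by
  ext x y
  simpa [graph, map] using fun _ h => hi ⟨_, h⟩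

/-- The coloring all of whose edges have color `i`. -/
def const (V : Type*) (i : K) : GallaiColoring V K where
  color _ _ := i
  symm _ _ := rfl
  not_rainbow _ _ _ := .inl rfl

theorem graph_const_of_ne {i j : K} (h : i ≠ j) : (const V i).graph j = ⊥ := by
  ext x y
  simp [graph, const, h]

theorem encard_support_graph_const_le [Fintype V] [DecidableEq K] (i j : K) :
    ((const V i).graph j).support.encard ≤ if i = j then Fintype.card V else 0 := by
  split_ifs with h
  · grw [Set.subset_univ ((const V i).graph j).support]
    rw [Set.encard_univ, ENat.card_eq_coe_fintype_card]
  · simp [graph_const_of_ne h]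

end Basic

section Subst

variable {P K : Type*} [DecidableEq P] {V : P → Type*}

/-- Substitution of the colorings `c p` for the vertices `p` of `d`: an edge inside a part is
colored by the coloring of that part, an edge between two parts by the reduced coloring `d`. -/
def subst (d : GallaiColoring P K) (c : ∀ p, GallaiColoring (V p) K) :
    GallaiColoring (Σ p, V p) K where
  color x y := if h : x.1 = y.1 then (c y.1).color (h ▸ x.2) y.2 else d.color x.1 y.1
  symm := by
    rintro ⟨p, x⟩ ⟨q, y⟩
    obtain rfl | hpq := eq_or_ne p q
    · simpa using (c p).symm x y
    · simpa [hpq, hpq.symm] using d.symm p q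
  not_rainbow := by
    rintro ⟨p, x⟩ ⟨q, y⟩ ⟨r, z⟩
    obtain rfl | hpq := eq_or_ne p q
    · obtain rfl | hpr := eq_or_ne p r
      · simpa using (c p).not_rainbow x y z
      · simp [hpr]
    · obtain rfl | hpr := eq_or_ne p r
      · simp [hpq, hpq.symm, d.symm p q]
      · obtain rfl | hqr := eq_or_ne q r
        · simp [hpq]
        · simpa [hpq, hpr, hqr] using d.not_rainbow p q r

theorem graph_subst (d : GallaiColoring P K) (c : ∀ p, GallaiColoring (V p) K) (i : K) :
    (d.subst c).graph i = lexSum (d.graph i) fun p => (c p).graph i := by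
  ext ⟨p, x⟩ ⟨q, y⟩
  obtain rfl | hpq := eq_or_ne p q
  · simp [graph, subst, lexSum, Sigma.lex_iff]
  · simp [graph, subst, lexSum, Sigma.lex_iff, hpq]

end Subst

section Pentagon

variable {K : Type*} {α β : K}

/-- The coloring of `K_5` by two pentagons: `p` and `p ± 1` are joined in color `α`, `p` and `p ± 2`
in color `β`. -/
def pentagon (α β : K) : GallaiColoring (Fin 5) K where
  color p q := if (cycleGraph 5).Adj p q then α else β
  symm p q := by simp only [adj_comm]
  not_rainbow p q r := by grind

theorem graph_pentagon_of_ne {i : K} (hα : α ≠ i) (hβ : β ≠ i) : (pentagon α β).graph i = ⊥ := by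
  ext p q
  simpa [graph, pentagon] using fun _ => by split_ifs <;> assumption

theorem cliqueFree_graph_pentagon (h : α ≠ β) (i : K) : ((pentagon α β).graph i).CliqueFree 3 := by
  have hcycle : ∀ p q r : Fin 5, p ≠ q → p ≠ r → q ≠ r →
      ¬ ((cycleGraph 5).Adj p q ↔ (cycleGraph 5).Adj p r) ∨
      ¬ ((cycleGraph 5).Adj p q ↔ (cycleGraph 5).Adj q r) := by
    decide
  intro S hS
  obtain ⟨p, q, r, ⟨hpq, cpq⟩, ⟨hpr, cpr⟩, ⟨hqr, cqr⟩, -⟩ := is3Clique_iff.1 hS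
  grind [pentagon]

end Pentagon

/-- A Gallai coloring of 14 vertices: the pentagon of colors `2` and `3` with its vertices replaced
by an edge of color `s` and four monochromatic triangles, placed so that a color-`2` triangle is
joined to no other one in color `2`, and likewise for color `3`. -/
def coloring14 (s : Fin 4) : GallaiColoring (Σ q : Fin 5, Fin (![2, 3, 3, 3, 3] q)) (Fin 4) :=
  (pentagon 2 3).subst fun q => const _ (![s, 2, 3, 3, 2] q)

theorem fanFree_graph_coloring14 {s : Fin 4} (hs : s < 2) (i : Fin 4) :
    FanFree 3 ((coloring14 s).graph i) := by
  rw [coloring14, graph_subst]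
  refine fanFree_three_lexSum (cliqueFree_graph_pentagon (by decide) i)
    (fun q => if ![s, 2, 3, 3, 2] q = i then 2 else 0)
    (fun q => (encard_support_graph_const_le (V := Fin (![2, 3, 3, 3, 3] q)) _ i).trans ?_) ?_
  · rw [Fintype.card_fin]
    norm_cast
    decide +revert
  · decide +revert

theorem encard_support_graph_coloring14_le (s : Fin 4) {i : Fin 4} (hi : i < 2) :
    ((coloring14 s).graph i).support.encard ≤ if s = i then 2 else 0 := by
  have hne : 2 ≠ i ∧ 3 ≠ i := by decide +revert
  have hempty : ∀ q ≠ 0, (const (Fin (![2, 3, 3, 3, 3] q)) (![s, 2, 3, 3, 2] q)).graph i = ⊥ :=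
    fun q hq => graph_const_of_ne (by decide +revert)
  rw [coloring14, graph_subst, graph_pentagon_of_ne hne.1 hne.2, support_lexSum_bot hempty,
    sigma_mk_injective.encard_image]
  simpa using encard_support_graph_const_le (V := Fin 2) s i

/-- A Gallai coloring of 70 vertices: the pentagon of colors `0` and `1` with its vertices replaced
by copies of `coloring14`. The color `s` of their exceptional edges is chosen so that, in each
color, a part and its neighbors of that color contain at most two exceptional edges of that
color. -/
def coloring70 :
    GallaiColoring (Σ _ : Fin 5, Σ q : Fin 5, Fin (![2, 3, 3, 3, 3] q)) (Fin 4) :=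
  (pentagon 0 1).subst fun p => coloring14 (![0, 0, 1, 1, 1] p)

theorem fanFree_graph_coloring70 (i : Fin 4) : FanFree 3 (coloring70.graph i) := by
  have hs : ∀ p : Fin 5, (![0, 0, 1, 1, 1] : Fin 5 → Fin 4) p < 2 := by decide
  rw [coloring70, graph_subst]
  obtain hi | hi := lt_or_ge i 2
  · refine fanFree_three_lexSum (cliqueFree_graph_pentagon (by decide) i)
      (fun p => if ![0, 0, 1, 1, 1] p = i then 1 else 0)
      (fun p => (encard_support_graph_coloring14_le _ hi).trans ?_) ?_
    · split_ifs <;> norm_num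
    · decide +revert
  · have hne : (0 : Fin 4) ≠ i ∧ (1 : Fin 4) ≠ i := by decide +revert
    rw [graph_pentagon_of_ne hne.1 hne.2]
    exact fanFree_lexSum_bot fun p => fanFree_graph_coloring14 (hs p) i

end GallaiColoring

/-- `K` colors suffice for a Gallai coloring of the complete graph on `V` without a monochromatic
fan `K_1 + nK_2`. -/
def FanFreeColorable (n : ℕ) (V K : Type*) : Prop :=
  ∃ c : GallaiColoring V K, ∀ i, FanFree n (c.graph i)

namespace FanFreeColorable

open GallaiColoring

variable {V W K L : Type*} {n : ℕ}

theorem of_embedding (h : FanFreeColorable n V K) (f : W ↪ V) (g : K ≃ L) :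
    FanFreeColorable n W L := by
  obtain ⟨c, hc⟩ := h
  refine ⟨(c.comap f).map g, g.forall_congr_right.1 fun i => ?_⟩
  rw [graph_map_apply g.injective]
  exact (hc i).of_isContained (c.graph_comap_isContained f i)

theorem subst_pentagon (h : FanFreeColorable 3 V K) :
    FanFreeColorable 3 (Σ _ : Fin 5, V) (K ⊕ Fin 2) := by
  classical
  obtain ⟨c, hc⟩ := h
  refine ⟨(pentagon (.inr 0) (.inr 1)).subst fun _ => c.map .inl, fun i => ?_⟩
  rw [graph_subst]
  obtain i | i := i
  · rw [graph_pentagon_of_ne Sum.inr_ne_inl Sum.inr_ne_inl, graph_map_apply Sum.inl_injective]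
    exact fanFree_lexSum_bot fun _ => hc i
  · rw [graph_map_of_notMem_range (by simp)]
    exact fanFree_three_lexSum (cliqueFree_graph_pentagon (by simp) _) 0 (by simp) (by simp)

theorem three_fin (m : ℕ) : FanFreeColorable 3 (Fin (14 * 5 ^ (m + 1))) (Fin (2 * m + 4)) := by
  induction m with
  | zero =>
    have hcard : Fintype.card (Σ _ : Fin 5, Σ q : Fin 5, Fin (![2, 3, 3, 3, 3] q)) =
        14 * 5 ^ (0 + 1) := by
      simp [Fin.sum_univ_five]
    exact of_embedding ⟨coloring70, fanFree_graph_coloring70⟩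
      (Fintype.equivFinOfCardEq hcard).symm.toEmbedding (Equiv.refl _)
  | succ m ih =>
    have hcard : Fintype.card (Σ _ : Fin 5, Fin (14 * 5 ^ (m + 1))) = 14 * 5 ^ (m + 1 + 1) := by
      simp only [Fintype.card_sigma, Fintype.card_fin, Finset.sum_const, Finset.card_univ,
        smul_eq_mul]
      ring
    exact ih.subst_pentagon.of_embedding (Fintype.equivFinOfCardEq hcard).symm.toEmbedding
      (finSumFinEquiv.trans (finCongr (by ring)))

end FanFreeColorable

/-- For every even integer `k ≥ 4`, there exists a Gallai `k`-coloring of the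
complete graph on `14 · 5^((k-2)/2)` vertices with no monochromatic copy of the
fan `F_3`. Consequently `GR_k(F_3) ≥ 14 · 5^((k-2)/2) + 1`. -/
theorem fan3_gallai_lower (k : ℕ) (hk : 4 ≤ k) (hke : k % 2 = 0) :
    (∃ c : Fin (14 * 5 ^ ((k - 2) / 2)) → Fin (14 * 5 ^ ((k - 2) / 2)) → Fin k,
      (∀ x y, c x y = c y x) ∧
      NoRainbowTriangle (⊤ : SimpleGraph (Fin (14 * 5 ^ ((k - 2) / 2)))) c ∧
      ¬ IsMonoCopy (⊤ : SimpleGraph (Fin (14 * 5 ^ ((k - 2) / 2)))) c fanF3) ∧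
    14 * 5 ^ ((k - 2) / 2) + 1 ≤ GallaiRamsey k fanF3 := by
  obtain ⟨m, rfl⟩ : ∃ m, k = 2 * m + 4 := ⟨(k - 4) / 2, by omega⟩
  obtain ⟨c, hc⟩ := FanFreeColorable.three_fin m
  have hfree : ∀ i, fanF3.Free (c.graph i) := fun i hi =>
    not_fanFree_fanF3 ((hc i).of_isContained hi)
  rw [show (2 * m + 4 - 2) / 2 = m + 1 by omega]
  have hmono : ¬ IsMonoCopy ⊤ c.color fanF3 := c.isMonoCopy_iff.not.2 (not_exists.2 hfree)
  exact ⟨⟨c.color, c.symm, c.noRainbowTriangle, hmono⟩, c.lt_gallaiRamsey hfree⟩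
end

section
/- There exists an edge 2-coloring of the complete graph on 13 vertices that contains no monochromatic copy of the fan F_3. Consequently GR_2(F_3) ≥ 14. -/
open SimpleGraph

/-!
Two-coloring the edges of a complete graph amounts to choosing a graph `G`, so one looks for `G` on
`13` vertices such that neither `G` nor `Gᶜ` contains a fan. A fan centered at `v` is a matching of
three edges inside the neighborhood of `v`, and by weak duality a fractional vertex cover of total
weight less than `3` excludes it. Such covers are exhibited for an explicit graph, built from
blocks of sizes `4`, `2`, `3` and `4`, and for its complement.

The bound on `GR_2(F_3)` follows by restricting this coloring to fewer vertices, once Ramsey's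
theorem shows that the infimum defining the Gallai–Ramsey number is not over the empty set.
-/

section Transport

variable {V W α : Type*} {k : ℕ} {G : SimpleGraph V} {G' : SimpleGraph W} {c : W → W → Fin k}

theorem NoRainbowTriangle.comap (h : NoRainbowTriangle G' c) (g : G →g G') :
    NoRainbowTriangle G (fun x y => c (g x) (g y)) := by
  rintro ⟨x, y, z, hxy, hyz, hxz, hne⟩
  exact h ⟨g x, g y, g z, g.map_adj hxy, g.map_adj hyz, g.map_adj hxz, hne⟩

theorem IsMonoCopy.map {H : SimpleGraph α} (g : Copy G G')
    (h : IsMonoCopy G (fun x y => c (g x) (g y)) H) : IsMonoCopy G' c H := by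
  obtain ⟨f, i, hf, hadj⟩ := h
  exact ⟨g ∘ f, i, g.injective.comp hf, fun a b hab =>
    ⟨g.toHom.map_adj (hadj a b hab).1, (hadj a b hab).2⟩⟩

theorem noRainbowTriangle_of_two_colors (G : SimpleGraph V) (c : V → V → Fin 2) :
    NoRainbowTriangle G c := by
  rintro ⟨x, y, z, -, -, -, h₁, h₂, h₃⟩
  grind

end Transport

section Ramsey

variable {V α κ : Type*}

theorem exists_le_card_fiber_erase [Fintype κ] [DecidableEq V] [DecidableEq κ] (f : V → κ)
    {S : Finset V} {v : V} (hv : v ∈ S) {m : ℕ}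
    (hS : (Fintype.card κ + 1) * m ≤ S.card) :
    ∃ i, m ≤ {x ∈ S.erase v | f x = i}.card := by
  obtain rfl | hm := m.eq_zero_or_pos
  · exact ⟨f v, Nat.zero_le _⟩
  have hcard : (Finset.univ : Finset κ).card * m ≤ (S.erase v).card := by
    rw [Finset.card_erase_of_mem hv, Finset.card_univ]
    rw [add_mul] at hS
    omega
  obtain ⟨i, -, hi⟩ := Finset.exists_le_card_fiber_of_mul_le_card_of_maps_to
    (fun x _ => Finset.mem_univ (f x)) ⟨f v, Finset.mem_univ _⟩ hcard
  exact ⟨i, hi⟩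

theorem exists_monochromatic_finset [Fintype κ] {c : V → V → κ}
    (hc : ∀ x y, c x y = c y x) (n : κ → ℕ) (S : Finset V)
    (hS : (Fintype.card κ + 1) ^ ∑ i, n i ≤ S.card) :
    ∃ i, ∃ T ⊆ S, T.card = n i ∧ (T : Set V).Pairwise fun x y => c x y = i := by
  classical
  induction hs : ∑ i, n i generalizing n S with
  | zero =>
    obtain ⟨v, -⟩ : S.Nonempty := Finset.card_pos.mp (lt_of_lt_of_le (by positivity) hS)
    have hzero : n (c v v) = 0 := Finset.sum_eq_zero_iff.mp hs _ (Finset.mem_univ _)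
    exact ⟨c v v, ∅, by simp, by simp [hzero], by simp⟩
  | succ s ih =>
    obtain ⟨v, hv⟩ : S.Nonempty := Finset.card_pos.mp (lt_of_lt_of_le (by positivity) hS)
    rw [hs, pow_succ'] at hS
    obtain ⟨i, hi⟩ := exists_le_card_fiber_erase (c v) hv hS
    obtain hni | hni := Nat.eq_zero_or_pos (n i)
    · exact ⟨i, ∅, by simp, by simp [hni], by simp⟩
    have hsum : ∑ j, Function.update n i (n i - 1) j = s := by
      rw [Finset.sum_update_of_mem (Finset.mem_univ i)]
      rw [Finset.sum_eq_add_sum_sdiff_singleton_of_mem (Finset.mem_univ i)] at hs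
      omega
    obtain ⟨j, T, hT, hcard, hmono⟩ := ih _ _ (by rwa [hsum]) hsum
    have hTS : T ⊆ S := hT.trans ((Finset.filter_subset _ _).trans (Finset.erase_subset _ _))
    obtain rfl | hji := eq_or_ne j i
    · have hvT : v ∉ T := fun h => by simpa using hT h
      have hcolor : ∀ x ∈ T, c v x = j := fun x hx => (Finset.mem_filter.mp (hT hx)).2
      refine ⟨j, insert v T, Finset.insert_subset hv hTS, ?_, ?_⟩
      · rw [Finset.card_insert_of_notMem hvT, hcard, Function.update_self]
        omega
      · rw [Finset.coe_insert, Set.pairwise_insert]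
        exact ⟨hmono, fun x hx _ => ⟨hcolor x hx, (hc x v).trans (hcolor x hx)⟩⟩
    · exact ⟨j, T, hTS, by rw [hcard, Function.update_of_ne hji], hmono⟩

theorem isMonoCopy_of_pairwise [Fintype α] {k : ℕ} {c : V → V → Fin k} {i : Fin k}
    {T : Finset V} (hT : (T : Set V).Pairwise fun x y => c x y = i) (H : SimpleGraph α)
    (hcard : Fintype.card α ≤ T.card) : IsMonoCopy (⊤ : SimpleGraph V) c H := by
  obtain ⟨f⟩ : Nonempty (α ↪ T) := Function.Embedding.nonempty_of_card_le (by simpa using hcard)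
  have hf : Function.Injective fun a => (f a : V) := Subtype.val_injective.comp f.injective
  exact ⟨_, i, hf, fun a b hab =>
    ⟨hf.ne hab.ne, hT (f a).2 (f b).2 (hf.ne hab.ne)⟩⟩

theorem exists_forall_isMonoCopy [Finite α] (k : ℕ) (H : SimpleGraph α) :
    ∃ N, ∀ c : Fin N → Fin N → Fin k, (∀ x y, c x y = c y x) →
      IsMonoCopy (⊤ : SimpleGraph (Fin N)) c H := by
  cases nonempty_fintype α
  refine ⟨(k + 1) ^ ∑ _ : Fin k, Fintype.card α, fun c hc => ?_⟩
  obtain ⟨i, T, -, hcard, hT⟩ :=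
    exists_monochromatic_finset hc (fun _ => Fintype.card α) Finset.univ (by simp)
  exact isMonoCopy_of_pairwise hT H hcard.ge

theorem card_lt_gallaiRamsey [Fintype V] [Finite α] {k : ℕ} {H : SimpleGraph α}
    {c : V → V → Fin k} (hc : ∀ x y, c x y = c y x)
    (hrainbow : NoRainbowTriangle (⊤ : SimpleGraph V) c)
    (hH : ¬ IsMonoCopy (⊤ : SimpleGraph V) c H) : Fintype.card V < GallaiRamsey k H := by
  obtain ⟨R, hR⟩ := exists_forall_isMonoCopy k H
  rw [GallaiRamsey, ← Nat.succ_le_iff]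
  refine le_csInf ⟨R, fun c hc _ => hR c hc⟩ fun N hN => ?_
  by_contra! hlt
  obtain ⟨e⟩ : Nonempty (Fin N ↪ V) :=
    Function.Embedding.nonempty_of_card_le (by simpa using Nat.le_of_lt_succ hlt)
  let g := Embedding.completeGraph e
  exact hH ((hN _ (fun _ _ => hc _ _) (hrainbow.comap g.toHom)).map g.toCopy)

end Ramsey

section GraphColoring

variable {V α : Type*}

/-- The 2-coloring of a complete graph whose color `1` is the graph `G`
and whose color `0` is the complement of `G`. -/
def adjColoring (G : SimpleGraph V) [DecidableRel G.Adj] (x y : V) : Fin 2 :=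
  if G.Adj x y then 1 else 0

variable {G : SimpleGraph V}

theorem adjColoring_comm [DecidableRel G.Adj] (x y : V) :
    adjColoring G x y = adjColoring G y x := by
  simp only [adjColoring, G.adj_comm]

theorem isMonoCopy_adjColoring_iff [DecidableRel G.Adj] {H : SimpleGraph α} :
    IsMonoCopy (⊤ : SimpleGraph V) (adjColoring G) H ↔ H ⊑ G ∨ H ⊑ Gᶜ := by
  constructor
  · rintro ⟨f, i, hf, h⟩
    obtain rfl | rfl : i = 0 ∨ i = 1 := by omega
    · exact Or.inr ⟨⟨f, fun {a b} hab => ⟨(h a b hab).1, fun hG => by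
        simpa [adjColoring, hG] using (h a b hab).2⟩⟩, hf⟩
    · exact Or.inl ⟨⟨f, fun {a b} hab => by
        by_contra hG
        simpa [adjColoring, hG] using (h a b hab).2⟩, hf⟩
  · rintro (⟨⟨f, hf⟩⟩ | ⟨⟨f, hf⟩⟩)
    · exact ⟨f, 1, hf, fun a b hab => ⟨(f.map_adj hab).ne, if_pos (f.map_adj hab)⟩⟩
    · exact ⟨f, 0, hf, fun a b hab => ⟨(f.map_adj hab).ne, if_neg (f.map_adj hab).2⟩⟩

-- The fractional vertex cover of the neighborhood of `v` is `w v / 2`; doubling it keeps the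
-- weights integral.
theorem fanF3_free_of_linkWeight [Fintype V] (w : V → V → ℕ)
    (hcover : ∀ v x y, G.Adj v x → G.Adj v y → G.Adj x y → 2 ≤ w v x + w v y)
    (hweight : ∀ v, ∑ x, w v x < 6) : fanF3.Free G := by
  rintro ⟨f⟩
  have hspoke (a : Fin 7) (ha : a ≠ 0) : G.Adj (f 0) (f a) :=
    f.toHom.map_adj (by simp [fanF3, ha.symm])
  have hrim (a b : Fin 7) (ha : a ≠ 0) (hb : b ≠ 0) (hab : fanF3.Adj a b) :
      2 ≤ w (f 0) (f a) + w (f 0) (f b) :=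
    hcover _ _ _ (hspoke a ha) (hspoke b hb) (f.toHom.map_adj hab)
  have h₁₂ := hrim 1 2 (by decide) (by decide) (by simp [fanF3])
  have h₃₄ := hrim 3 4 (by decide) (by decide) (by simp [fanF3])
  have h₅₆ := hrim 5 6 (by decide) (by decide) (by simp [fanF3])
  have hsum : ∑ a, w (f 0) (f a) < 6 :=
    calc ∑ a, w (f 0) (f a) = ∑ x ∈ Finset.univ.map f.toEmbedding, w (f 0) x :=
          (Finset.sum_map Finset.univ f.toEmbedding _).symm
      _ ≤ ∑ x, w (f 0) x := Finset.sum_le_univ_sum_of_nonneg fun _ => Nat.zero_le _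
      _ < 6 := hweight (f 0)
  simp only [Fin.sum_univ_seven] at hsum
  omega

end GraphColoring

section Construction

/-- The 13 vertices of `fanFreeGraph`, grouped into its four blocks. -/
inductive FanFreeVertex
  | clique (i : Fin 4)
  | pair (i : Fin 2)
  | triple (i : Fin 3)
  | cycle (i : Fin 4)
  deriving DecidableEq, Fintype

namespace FanFreeVertex

theorem card_eq : Fintype.card FanFreeVertex = 13 := rfl

/-- One orientation of each edge of `fanFreeGraph`. -/
def rel : FanFreeVertex → FanFreeVertex → Bool
  | clique _, clique _ => true
  | clique _, pair _ => true
  | pair _, triple _ => true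
  | triple _, cycle _ => true
  | cycle i, cycle j => j = i + 1
  | clique i, cycle j => i = j
  | _, _ => false

end FanFreeVertex

open FanFreeVertex

/-- A graph that, like its complement, contains no `F_3`: a 4-clique, an independent pair, an
independent triple and a 4-cycle, with consecutive blocks completely joined and the cycle linked
back to the clique by a perfect matching. -/
def fanFreeGraph : SimpleGraph FanFreeVertex :=
  SimpleGraph.fromRel fun x y => rel x y

instance : DecidableRel fanFreeGraph.Adj :=
  inferInstanceAs (DecidableRel (SimpleGraph.fromRel _).Adj)

/-- Twice a fractional vertex cover of the graph induced by `fanFreeGraph` on the neighborhood of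
its first argument, evaluated at the second. -/
def linkWeight : FanFreeVertex → FanFreeVertex → ℕ
  | clique i, clique j => if i = j then 0 else 1
  | clique _, pair _ => 1
  | pair _, clique _ => 1
  | triple _, cycle _ => 1
  | cycle _, triple _ => 1
  | cycle i, cycle j => if j = i + 1 ∨ i = j + 1 then 1 else 0
  | _, _ => 0

/-- Twice a fractional vertex cover of the graph induced by `fanFreeGraphᶜ` on the neighborhood of
its first argument, evaluated at the second. -/
def complLinkWeight : FanFreeVertex → FanFreeVertex → ℕ
  | clique _, triple _ => 1
  | clique i, cycle j => if j = i + 1 ∨ i = j + 1 then 1 else 0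
  | pair i, pair j => if i = j then 0 else 1
  | pair _, cycle _ => 1
  | triple i, triple j => if i = j then 0 else 2
  | cycle i, clique j => if j = i + 1 ∨ i = j + 1 then 1 else 0
  | cycle _, pair _ => 1
  | cycle i, cycle j => if j = i + 2 then 1 else 0
  | _, _ => 0

theorem fanF3_free_fanFreeGraph : fanF3.Free fanFreeGraph :=
  fanF3_free_of_linkWeight linkWeight
    (hcover := by decide +kernel) (hweight := by decide +kernel)

theorem fanF3_free_compl_fanFreeGraph : fanF3.Free fanFreeGraphᶜ :=
  fanF3_free_of_linkWeight complLinkWeight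
    (hcover := by decide +kernel) (hweight := by decide +kernel)

end Construction

/-- There is an edge 2-coloring of the complete graph on 13 vertices with no
monochromatic copy of the fan `F_3`. Consequently `GR_2(F_3) ≥ 14`. -/
theorem fan3_two_color_lower :
    (∃ c : Fin 13 → Fin 13 → Fin 2, (∀ x y, c x y = c y x) ∧
      ¬ IsMonoCopy (⊤ : SimpleGraph (Fin 13)) c fanF3) ∧
    14 ≤ GallaiRamsey 2 fanF3 := by
  have hmono : ¬ IsMonoCopy (⊤ : SimpleGraph FanFreeVertex) (adjColoring fanFreeGraph) fanF3 := by
    rw [isMonoCopy_adjColoring_iff]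
    exact not_or_intro fanF3_free_fanFreeGraph fanF3_free_compl_fanFreeGraph
  constructor
  · let e := (Fintype.equivFinOfCardEq FanFreeVertex.card_eq).symm
    exact ⟨fun x y => adjColoring fanFreeGraph (e x) (e y), fun _ _ => adjColoring_comm _ _,
      fun h => hmono (h.map (Embedding.completeGraph e.toEmbedding).toCopy)⟩
  · exact card_lt_gallaiRamsey adjColoring_comm (noRainbowTriangle_of_two_colors _ _) hmono
end

section
/- Let m ≥ 6 be an even integer and let R be a simple graph whose vertex set is partitioned into five sets V_1, V_2, V_3, V_4, V_5 (indices taken modulo 5) such that: (i) for every i, every vertex of V_i is adjacent in R to every vertex of V_{i+1}; (ii) for every i, no vertex of V_i is adjacent in R to any vertex of V_{i+2}; (iii) no two vertices inside V_1 are adjacent, no two vertices inside V_3 are adjacent, and no two vertices inside V_4 are adjacent; (iv) in the subgraph of R induced on V_2, and likewise in the subgraph induced on V_5, every vertex has degree at most m/2 − 1 and every connected component has at most m − 1 vertices. Then R contains no copy of the kipas K̂_m (no injective map from the vertices of K̂_m into V(R) sending edges of K̂_m to edges of R). -/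
open SimpleGraph

/-!
A triangle of `R` has two vertices in a common part, since `C₅` is triangle-free, and such a part
is `V₂` or `V₅`; these two are not consecutive. Apply this to the triangles formed by the centre
and two successive vertices of the path. If the centre lies in `V₂` or `V₅`, then of any two
successive path vertices one is in its part, so the centre has at least `⌊m / 2⌋` neighbours there.
Otherwise any two successive path vertices are in the same part, so the whole path is in one
component of `V₂` or of `V₅`.
-/

lemma kipasG_adj_zero_succ {m : ℕ} (i : Fin m) : (kipasG m).Adj 0 i.succ :=
  (fromRel_adj _ _ _).2 ⟨i.succ_ne_zero.symm, Or.inl (Or.inl rfl)⟩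

/-- The path `P_m` of the kipas `K̂_m = K_1 + P_m`, as a copy inside it. -/
def kipasPath (m : ℕ) : Copy (pathGraph m) (kipasG m) where
  toHom :=
    { toFun := Fin.succ
      map_rel' := by
        intro i j hij
        refine (fromRel_adj _ _ _).2 ⟨(Fin.succ_injective m).ne hij.ne, ?_⟩
        rw [pathGraph_adj] at hij
        simp only [Fin.val_succ]
        omega }
  injective' := Fin.succ_injective m

lemma div_two_le_encard_of_isVertexCover_pathGraph {m : ℕ} {s : Set (Fin m)}
    (hs : (pathGraph m).IsVertexCover s) : ((m / 2 : ℕ) : ℕ∞) ≤ s.encard := by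
  -- The edges `{2j, 2j + 1}` form a matching, so `i ↦ i / 2` maps a cover onto `{0, …, m / 2 - 1}`.
  have hsub : (Finset.range (m / 2) : Set ℕ) ⊆ (fun i : Fin m => i.val / 2) '' s := by
    intro j hj
    have hj' : j < m / 2 := by simpa using hj
    have hadj : (pathGraph m).Adj ⟨2 * j, by omega⟩ ⟨2 * j + 1, by omega⟩ :=
      pathGraph_adj.2 (Or.inl rfl)
    rcases hs hadj with h | h
    · exact ⟨_, h, by dsimp only; omega⟩
    · exact ⟨_, h, by dsimp only; omega⟩
  calc ((m / 2 : ℕ) : ℕ∞) = (Finset.range (m / 2) : Set ℕ).encard := by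
        rw [Set.encard_coe_eq_coe_finsetCard, Finset.card_range]
    _ ≤ ((fun i : Fin m => i.val / 2) '' s).encard := Set.encard_le_encard hsub
    _ ≤ s.encard := Set.encard_image_le _ _

lemma reachableWithin_of_hom {A V : Type*} {T : SimpleGraph A} {R : SimpleGraph V} {s : Set V}
    (φ : T →g R) (hφ : ∀ a, φ a ∈ s) {a b : A} (hab : T.Reachable a b) :
    ReachableWithin R s (φ a) (φ b) := by
  obtain ⟨w⟩ := hab
  refine ⟨w.map φ, fun x hx => ?_⟩
  rw [Walk.support_map] at hx
  obtain ⟨d, -, rfl⟩ := List.mem_map.1 hx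
  exact hφ d

lemma eq_of_reachable_of_forall_adj {A β : Type*} {T : SimpleGraph A} {g : A → β}
    (hg : ∀ a b, T.Adj a b → g a = g b) {a b : A} (hab : T.Reachable a b) : g a = g b := by
  obtain ⟨w⟩ := hab
  induction w with
  | nil => rfl
  | cons h _ ih => exact (hg _ _ h).trans ih

/-- `R` is a subgraph of a blow-up of `H` whose parts are the fibres of `P`, where the parts over
`S` may contain arbitrary edges and the other parts are independent. -/
def IsBlowupSubgraph {V W : Type*} (R : SimpleGraph V) (H : SimpleGraph W) (S : Set W)
    (P : V → W) : Prop :=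
  ∀ ⦃u v⦄, R.Adj u v → H.Adj (P u) (P v) ∨ P u = P v ∧ P u ∈ S

namespace IsBlowupSubgraph

variable {V W : Type*} {R : SimpleGraph V} {H : SimpleGraph W} {S : Set W} {P : V → W}
  {c u v : V}

lemma eq_of_triangle (hR : IsBlowupSubgraph R H S P) (hH : H.CliqueFree 3)
    (hcu : R.Adj c u) (hcv : R.Adj c v) (huv : R.Adj u v) :
    (P c = P u ∧ P c ∈ S) ∨ (P c = P v ∧ P c ∈ S) ∨ (P u = P v ∧ P u ∈ S) := by
  classical
  rcases hR hcu with hcu' | hcu'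
  · rcases hR hcv with hcv' | hcv'
    · rcases hR huv with huv' | huv'
      · exact absurd (is3Clique_triple_iff.2 ⟨hcu', hcv', huv'⟩) (hH _)
      · exact Or.inr (Or.inr huv')
    · exact Or.inr (Or.inl hcv')
  · exact Or.inl hcu'

lemma eq_of_adj_of_mem (hR : IsBlowupSubgraph R H S P) (hS : H.IsIndepSet S)
    (huv : R.Adj u v) (hu : P u ∈ S) (hv : P v ∈ S) : P u = P v := by
  rcases hR huv with h | h
  · exact absurd h (hS hu hv h.ne)
  · exact h.1

variable {A : Type*} {T : SimpleGraph A}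

lemma isVertexCover_of_cone (hR : IsBlowupSubgraph R H S P) (hH : H.CliqueFree 3)
    (hS : H.IsIndepSet S) (φ : T →g R) (hφ : ∀ a, R.Adj c (φ a)) (hc : P c ∈ S) :
    T.IsVertexCover {a | P (φ a) = P c} := by
  intro a b hab
  rcases hR.eq_of_triangle hH (hφ a) (hφ b) (φ.map_adj hab) with h | h | ⟨-, ha⟩
  · exact Or.inl h.1.symm
  · exact Or.inr h.1.symm
  · exact Or.inl (hR.eq_of_adj_of_mem hS (hφ a) hc ha).symm

lemma eq_and_mem_of_cone (hR : IsBlowupSubgraph R H S P) (hH : H.CliqueFree 3)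
    (φ : T →g R) (hφ : ∀ a, R.Adj c (φ a)) (hc : P c ∉ S) {a b : A} (hab : T.Adj a b) :
    P (φ a) = P (φ b) ∧ P (φ a) ∈ S := by
  rcases hR.eq_of_triangle hH (hφ a) (hφ b) (φ.map_adj hab) with h | h | h
  · exact absurd h.2 hc
  · exact absurd h.2 hc
  · exact h

lemma div_two_le_encard_of_cone_path (hR : IsBlowupSubgraph R H S P) (hH : H.CliqueFree 3)
    (hS : H.IsIndepSet S) {m : ℕ} (φ : Copy (pathGraph m) R) (hφ : ∀ i, R.Adj c (φ i))
    (hc : P c ∈ S) : ((m / 2 : ℕ) : ℕ∞) ≤ {v | P v = P c ∧ R.Adj c v}.encard :=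
  (div_two_le_encard_of_isVertexCover_pathGraph
    (hR.isVertexCover_of_cone hH hS φ.toHom hφ hc)).trans
    (Set.encard_le_encard_of_injOn (fun i hi => ⟨hi, hφ i⟩) φ.injective.injOn)

lemma card_le_encard_reachableWithin_of_cone (hR : IsBlowupSubgraph R H S P)
    (hH : H.CliqueFree 3) (hT : T.Preconnected) (φ : Copy T R) (hφ : ∀ a, R.Adj c (φ a))
    (hc : P c ∉ S) (a : A) :
    ENat.card A ≤ {v | ReachableWithin R {w | P w = P (φ a)} (φ a) v}.encard := by
  have hfibre (b : A) : P (φ b) = P (φ a) :=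
    eq_of_reachable_of_forall_adj (g := fun d => P (φ d))
      (fun _ _ h => (hR.eq_and_mem_of_cone hH φ.toHom hφ hc h).1) (hT b a)
  rw [← Set.encard_univ]
  exact Set.encard_le_encard_of_injOn
    (fun b _ => reachableWithin_of_hom φ.toHom hfibre (hT a b)) φ.injective.injOn

end IsBlowupSubgraph

theorem no_kipas_in_blowup_general {V W : Type*} {m : ℕ} (hm : 2 ≤ m) {R : SimpleGraph V}
    {H : SimpleGraph W} (hH : H.CliqueFree 3) {S : Set W} (hS : H.IsIndepSet S) {P : V → W}
    (hR : IsBlowupSubgraph R H S P)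
    (hdeg : ∀ u, P u ∈ S → {v | P v = P u ∧ R.Adj u v}.encard < (m / 2 : ℕ))
    (hcomp : ∀ u, P u ∈ S → {v | ReachableWithin R {w | P w = P u} u v}.encard < m) :
    (kipasG m).Free R := by
  rintro ⟨κ⟩
  let φ : Copy (pathGraph m) R := κ.comp (kipasPath m)
  have hφ (i : Fin m) : R.Adj (κ 0) (φ i) := κ.toHom.map_adj (kipasG_adj_zero_succ i)
  by_cases hc : P (κ 0) ∈ S
  · exact (hdeg _ hc).not_ge (hR.div_two_le_encard_of_cone_path hH hS φ hφ hc)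
  · have : Nontrivial (Fin m) := Fin.nontrivial_iff_two_le.2 hm
    let i : Fin m := ⟨0, by omega⟩
    obtain ⟨j, hij⟩ := (pathGraph_preconnected m).exists_adj_of_nontrivial i
    have hi : P (φ i) ∈ S := (hR.eq_and_mem_of_cone hH φ.toHom hφ hc hij).2
    have hcard := hR.card_le_encard_reachableWithin_of_cone hH (pathGraph_preconnected m) φ hφ hc i
    rw [ENat.card_eq_coe_fintype_card, Fintype.card_fin] at hcard
    exact (hcomp _ hi).not_ge hcard

lemma cycleGraph_five_cliqueFree_three : (cycleGraph 5).CliqueFree 3 := by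
  intro s hs
  obtain ⟨a, b, c, hab, hac, hbc, -⟩ := is3Clique_iff.1 hs
  revert a b c
  decide

lemma cycleGraph_five_isIndepSet_one_four : (cycleGraph 5).IsIndepSet {1, 4} := by
  rintro a (rfl | rfl) b (rfl | rfl) <;> decide

lemma isBlowupSubgraph_cycleGraph_five {V : Type*} {R : SimpleGraph V} {P : V → Fin 5}
    (hfar : ∀ u v, P v = P u + 2 → ¬ R.Adj u v)
    (hempty : ∀ u v, P u = P v → (P u = 0 ∨ P u = 2 ∨ P u = 3) → ¬ R.Adj u v) :
    IsBlowupSubgraph R (cycleGraph 5) {1, 4} P := by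
  intro u v huv
  have hparts : ∀ a b : Fin 5, b ≠ a + 2 → a ≠ b + 2 → ¬ (a = b ∧ (a = 0 ∨ a = 2 ∨ a = 3)) →
      (cycleGraph 5).Adj a b ∨ a = b ∧ (a = 1 ∨ a = 4) := by decide
  exact hparts _ _ (fun h => hfar u v h huv) (fun h => hfar v u h huv.symm)
    (fun h => hempty u v h.1 h.2 huv)

lemma encard_lt_of_ncard_le_sub_one {α : Type*} {s : Set α} [Finite s] {n : ℕ} (hn : 0 < n)
    (hs : s.ncard ≤ n - 1) : s.encard < n := by
  rw [← Set.coe_ncard_eq_encard, Nat.cast_lt]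
  omega

/-- The blow-up lemma: a graph `R` whose vertices are partitioned into five
parts (via `P : V → Fin 5`, indices mod 5) such that consecutive parts are
completely joined, non-consecutive parts have no edges, parts `0, 2, 3`
(`V₁, V₃, V₄`) are internally edgeless, and inside parts `1, 4` (`V₂, V₅`)
every vertex has degree at most `m/2 - 1` and every connected component has at
most `m - 1` vertices, contains no copy of the kipas `K̂_m`. -/
theorem no_kipas_in_blowup {V : Type*} [Fintype V] (m : ℕ) (hm : 6 ≤ m)
    (hme : m % 2 = 0) (R : SimpleGraph V) (P : V → Fin 5)
    (hcomplete : ∀ u v : V, P v = P u + 1 → R.Adj u v)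
    (hfar : ∀ u v : V, P v = P u + 2 → ¬ R.Adj u v)
    (hempty : ∀ u v : V, P u = P v → (P u = 0 ∨ P u = 2 ∨ P u = 3) → ¬ R.Adj u v)
    (hdeg : ∀ u : V, (P u = 1 ∨ P u = 4) →
      ({v : V | P v = P u ∧ R.Adj u v}).ncard ≤ m / 2 - 1)
    (hcomp : ∀ u : V, (P u = 1 ∨ P u = 4) →
      ({v : V | ReachableWithin R {w : V | P w = P u} u v}).ncard ≤ m - 1) :
    ¬ ∃ f : Fin (m + 1) → V, Function.Injective f ∧
      ∀ a b, (kipasG m).Adj a b → R.Adj (f a) (f b) := by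
  rintro ⟨f, hf, hadj⟩
  exact no_kipas_in_blowup_general (by omega) cycleGraph_five_cliqueFree_three
    cycleGraph_five_isIndepSet_one_four (isBlowupSubgraph_cycleGraph_five hfar hempty)
    (fun u hu => encard_lt_of_ncard_le_sub_one (by omega) (hdeg u hu))
    (fun u hu => encard_lt_of_ncard_le_sub_one (by omega) (hcomp u hu)) ⟨⟨⟨f, hadj _ _⟩, hf⟩⟩
end
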